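/- Let σ be a set and let P = ℤ_p[{x_i}_{i ∈ σ}]. For each n ≥ 0 let P(n) = P ⊗_{ℤ_p} ⋯ ⊗_{ℤ_p} P ((n+1) tensor factors). Then the cochain complex with n-th term Ω¹_{P(n)/ℤ_p} and differential the alternating sum d^n = Σ_{j=0}^{n+1} (−1)^j (δ^n_j)_* of the maps induced by the coface ring homomorphisms is exact in every degree: d^0 : Ω¹_{P/ℤ_p} → Ω¹_{P(1)/ℤ_p} is injective, and for every n ≥ 1 the kernel of d^n equals the image of d^{n−1}. -/

import Mathlib

open KaehlerDifferential

/-- The map `g_* : Ω¹_{A/R} → Ω¹_{B/R}` on Kähler differentials induced by a homomorphism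
`g : A → B` of commutative `R`-algebras, sending `b · db'` to `g(b) · d(g(b'))`. -/
noncomputable def kaehlerMap {R A B : Type*} [CommRing R] [CommRing A] [CommRing B]
    [Algebra R A] [Algebra R B] (g : A →ₐ[R] B) : Ω[A⁄R] →+ Ω[B⁄R] :=
  letI : Algebra A B := g.toRingHom.toAlgebra
  haveI : IsScalarTower R A B := IsScalarTower.of_algebraMap_eq fun r => (g.commutes r).symm
  haveI : SMulCommClass R A B :=
    ⟨fun r a b => by simp only [Algebra.smul_def, ← mul_assoc, mul_comm]⟩
  (KaehlerDifferential.map R R A B).toAddMonoidHom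

/-- `P(n) = P ⊗_{ℤ_p} ⋯ ⊗_{ℤ_p} P` (`n+1` tensor factors) for `P = ℤ_p[{x_i}_{i ∈ σ}]`,
realized as the polynomial ring on the variables `x_i(e) = 1 ⊗ ⋯ ⊗ x_i ⊗ ⋯ ⊗ 1`
(with `x_i` in the `e`-th slot), i.e. on `σ × Fin (n+1)`. -/
abbrev tensorPowerPoly (p : ℕ) [Fact p.Prime] (σ : Type*) (n : ℕ) : Type _ :=
  MvPolynomial (σ × Fin (n + 1)) (PadicInt p)

/-- The `j`-th coface ring homomorphism `δ^n_j : P(n) → P(n+1)`: it sends the variable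
`x_i` in the `e`-th tensor slot to `x_i` in the `δ^n_j(e)`-th slot, where
`δ^n_j = Fin.succAbove j` is the injective monotone map omitting `j`
(slot `e ↦ e` for `e < j` and `e ↦ e+1` for `e ≥ j`). -/
noncomputable def tensorPowerPolyCoface (p : ℕ) [Fact p.Prime] (σ : Type*) (n : ℕ)
    (j : Fin (n + 2)) : tensorPowerPoly p σ n →ₐ[PadicInt p] tensorPowerPoly p σ (n + 1) :=
  MvPolynomial.rename (Prod.map id (Fin.succAbove j))

/-- The differential `d^n = Σ_{j=0}^{n+1} (−1)^j (δ^n_j)_*` on Kähler differentials. -/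
noncomputable def tensorPowerPolyOmegaDiff (p : ℕ) [Fact p.Prime] (σ : Type*) (n : ℕ) :
    Ω[tensorPowerPoly p σ n⁄PadicInt p] →+ Ω[tensorPowerPoly p σ (n + 1)⁄PadicInt p] :=
  ∑ j : Fin (n + 2), (-1 : ℤ) ^ (j : ℕ) • kaehlerMap (tensorPowerPolyCoface p σ n j)

/-!
The complex comes from a cosimplicial abelian group, so consecutive differentials compose to zero.
Setting the variables of slot zero to zero and shifting the other slots down gives an extra
codegeneracy `s`; the exactness is that of the contraction `s ∘ d + d ∘ s = id`. In degree zero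
the second term disappears, because it factors through `Ω¹` of the polynomial ring on zero slots,
that is, of the base ring.
-/

section KaehlerMap

universe u v

variable {R A B C : Type*} [CommRing R] [CommRing A] [CommRing B] [CommRing C]
  [Algebra R A] [Algebra R B] [Algebra R C]

theorem kaehlerMap_smul_D (g : A →ₐ[R] B) (a b : A) :
    kaehlerMap g (a • D R A b) = g a • D R B (g b) := by
  let := g.toRingHom.toAlgebra
  have : IsScalarTower R A B := IsScalarTower.of_algebraMap_eq fun r => (g.commutes r).symm
  have : SMulCommClass R A B :=
    ⟨fun r a b => by simp only [Algebra.smul_def, ← mul_assoc, mul_comm]⟩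
  change KaehlerDifferential.map R R A B (a • D R A b) = algebraMap A B a • D R B (algebraMap A B b)
  rw [map_smul, map_D, algebraMap_smul]

open scoped Pointwise in
theorem kaehlerDifferential_addMonoidHom_ext {M : Type*} [AddMonoid M] {f g : Ω[A⁄R] →+ M}
    (h : ∀ a b : A, f (a • D R A b) = g (a • D R A b)) : f = g := by
  have closure_eq_top : AddSubmonoid.closure (Set.univ (α := A) • Set.range (D R A)) = ⊤ := by
    rw [← Submodule.span_eq_closure, span_range_derivation, Submodule.top_toAddSubmonoid]
  refine AddMonoidHom.eq_of_eqOn_denseM closure_eq_top ?_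
  rintro _ ⟨a, -, _, ⟨b, rfl⟩, rfl⟩
  exact h a b

theorem kaehlerMap_id : kaehlerMap (AlgHom.id R A) = AddMonoidHom.id Ω[A⁄R] :=
  kaehlerDifferential_addMonoidHom_ext fun a b => by
    simp only [kaehlerMap_smul_D, AlgHom.id_apply, AddMonoidHom.id_apply]

theorem kaehlerMap_comp (f : B →ₐ[R] C) (g : A →ₐ[R] B) :
    kaehlerMap (f.comp g) = (kaehlerMap f).comp (kaehlerMap g) :=
  kaehlerDifferential_addMonoidHom_ext fun a b => by
    simp only [kaehlerMap_smul_D, AlgHom.comp_apply, AddMonoidHom.comp_apply]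

open CategoryTheory in
/-- The functor `A ↦ Ω¹_{A/R}` on commutative `R`-algebras. Its values are abelian groups because
the rings over which the `Ω¹_{A/R}` are modules vary. -/
noncomputable def kaehlerFunctor (R : Type u) [CommRing R] :
    CommAlgCat.{v} R ⥤ AddCommGrpCat.{v} where
  obj A := .of Ω[A⁄R]
  map f := AddCommGrpCat.ofHom (kaehlerMap f.hom)
  map_id _ := congrArg AddCommGrpCat.ofHom kaehlerMap_id
  map_comp f g := congrArg AddCommGrpCat.ofHom (kaehlerMap_comp g.hom f.hom)

end KaehlerMap

section ExtraCodegeneracy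

open CategoryTheory AlgebraicTopology.AlternatingCofaceMapComplex
open scoped Simplicial

variable {𝒞 : Type*} [Category* 𝒞] [Preadditive 𝒞]

/-- An extra codegeneracy of a cosimplicial object augmented by zero: maps that behave like a
codegeneracy `σ (-1)`. It contracts the alternating coface map complex. Only the cofaces enter the
differential, so compatibility with the codegeneracies is left out. -/
structure ExtraCodegeneracy (X : CosimplicialObject 𝒞) where
  s (n : ℕ) : X.obj ⦋n + 1⦌ ⟶ X.obj ⦋n⦌
  δ_zero_comp_s (n : ℕ) : X.δ (0 : Fin (n + 2)) ≫ s n = 𝟙 _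
  δ_one_comp_s_zero : X.δ (1 : Fin 2) ≫ s 0 = 0
  δ_succ_comp_s (n : ℕ) (j : Fin (n + 2)) : X.δ j.succ ≫ s (n + 1) = s n ≫ X.δ j

namespace ExtraCodegeneracy

variable {X : CosimplicialObject 𝒞} (c : ExtraCodegeneracy X)

theorem objD_zero_comp_s : objD X 0 ≫ c.s 0 = 𝟙 _ := by
  simp [Fin.sum_univ_two, Preadditive.add_comp, Preadditive.neg_comp, c.δ_zero_comp_s,
    c.δ_one_comp_s_zero]

theorem objD_succ_comp_s (n : ℕ) :
    objD X (n + 1) ≫ c.s (n + 1) + c.s n ≫ objD X n = 𝟙 _ := by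
  have tail_comp_s : (∑ j : Fin (n + 2), (-1 : ℤ) ^ (j.succ : ℕ) • X.δ j.succ) ≫ c.s (n + 1) =
      -(c.s n ≫ objD X n) := by
    simp only [objD, Preadditive.sum_comp, Preadditive.comp_sum, Preadditive.zsmul_comp,
      Preadditive.comp_zsmul, c.δ_succ_comp_s, Fin.val_succ, pow_succ, mul_neg_one, neg_smul,
      Finset.sum_neg_distrib, Preadditive.neg_comp]
  rw [objD, Fin.sum_univ_succ, Preadditive.add_comp, tail_comp_s, Fin.val_zero, pow_zero, one_smul,
    c.δ_zero_comp_s, neg_add_cancel_right]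

end ExtraCodegeneracy

end ExtraCodegeneracy

section TensorPower

universe u v

variable (R : Type u) [CommRing R] (σ : Type v)

/-- The coface homomorphism inserting a tensor factor `1` in slot `j` of the `n`-fold tensor power
of `R[{x_i}_{i ∈ σ}]`. Here `n` counts the tensor factors, so that `n = 0` gives the base ring. -/
noncomputable def polyCoface (n : ℕ) (j : Fin (n + 1)) :
    MvPolynomial (σ × Fin n) R →ₐ[R] MvPolynomial (σ × Fin (n + 1)) R :=
  MvPolynomial.rename (Prod.map id j.succAbove)

/-- The differential `Σ_j (−1)^j (δ_j)_*` on Kähler differentials of tensor powers of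
`R[{x_i}_{i ∈ σ}]`; its source has `n + 1` tensor factors. -/
noncomputable def polyOmegaDiff (n : ℕ) :
    Ω[MvPolynomial (σ × Fin (n + 1)) R⁄R] →+ Ω[MvPolynomial (σ × Fin (n + 2)) R⁄R] :=
  ∑ j : Fin (n + 2), (-1 : ℤ) ^ (j : ℕ) • kaehlerMap (polyCoface R σ (n + 1) j)

/-- The contracting homomorphism on tensor powers of `R[{x_i}_{i ∈ σ}]`: it sets the variables of
slot zero to zero and moves every other slot down by one. -/
noncomputable def killSlotZero (n : ℕ) :
    MvPolynomial (σ × Fin (n + 1)) R →ₐ[R] MvPolynomial (σ × Fin n) R :=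
  MvPolynomial.aeval fun q => Fin.cases 0 (fun e => MvPolynomial.X (q.1, e)) q.2

theorem killSlotZero_comp_polyCoface_zero (n : ℕ) :
    (killSlotZero R σ n).comp (polyCoface R σ n 0) = AlgHom.id R _ :=
  MvPolynomial.algHom_ext fun q => by simp [killSlotZero, polyCoface]

theorem killSlotZero_comp_polyCoface_succ (n : ℕ) (j : Fin (n + 1)) :
    (killSlotZero R σ (n + 1)).comp (polyCoface R σ (n + 1) j.succ) =
      (polyCoface R σ n j).comp (killSlotZero R σ n) := by
  refine MvPolynomial.algHom_ext fun ⟨i, e⟩ => ?_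
  cases e using Fin.cases <;> simp [killSlotZero, polyCoface]

theorem subsingleton_kaehlerDifferential_mvPolynomial (ι : Type*) [IsEmpty ι] :
    Subsingleton Ω[MvPolynomial ι R⁄R] :=
  subsingleton_of_surjective _ _ (MvPolynomial.C_surjective ι)

theorem kaehlerMap_killSlotZero_zero : kaehlerMap (killSlotZero R σ 0) = 0 :=
  have := subsingleton_kaehlerDifferential_mvPolynomial R (σ × Fin 0)
  AddMonoidHom.ext fun _ => Subsingleton.elim _ _

theorem kaehlerMap_killSlotZero_comp_polyCoface_zero (n : ℕ) :
    (kaehlerMap (killSlotZero R σ n)).comp (kaehlerMap (polyCoface R σ n 0)) =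
      AddMonoidHom.id _ := by
  rw [← kaehlerMap_comp, killSlotZero_comp_polyCoface_zero, kaehlerMap_id]

theorem kaehlerMap_killSlotZero_comp_polyCoface_succ (n : ℕ) (j : Fin (n + 1)) :
    (kaehlerMap (killSlotZero R σ (n + 1))).comp (kaehlerMap (polyCoface R σ (n + 1) j.succ)) =
      (kaehlerMap (polyCoface R σ n j)).comp (kaehlerMap (killSlotZero R σ n)) := by
  rw [← kaehlerMap_comp, killSlotZero_comp_polyCoface_succ, kaehlerMap_comp]

theorem kaehlerMap_killSlotZero_comp_polyCoface_one :
    (kaehlerMap (killSlotZero R σ 1)).comp (kaehlerMap (polyCoface R σ 1 1)) = 0 := by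
  rw [← Fin.succ_zero_eq_one, kaehlerMap_killSlotZero_comp_polyCoface_succ,
    kaehlerMap_killSlotZero_zero, AddMonoidHom.comp_zero]

open CategoryTheory AlgebraicTopology.AlternatingCofaceMapComplex
open scoped Simplicial

/-- The cosimplicial `R`-algebra whose `n`-th term is the `(n + 1)`-fold tensor power of
`R[{x_i}_{i ∈ σ}]`; a monotone map acts by relabelling the tensor slots. -/
noncomputable def polyCosimplicial : CosimplicialObject (CommAlgCat.{max u v} R) where
  obj n := .of R (MvPolynomial (σ × Fin (n.len + 1)) R)
  map f := CommAlgCat.ofHom (MvPolynomial.rename (Prod.map id f.toOrderHom))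
  map_id n := by
    ext1
    exact MvPolynomial.algHom_ext fun q => by simp
  map_comp f g := by
    ext1
    exact MvPolynomial.algHom_ext fun q => by simp [Prod.map]

/-- The cosimplicial abelian group `Ω¹_{P(n)/R}` of which `polyOmegaDiff` is the alternating sum of
coface maps. -/
noncomputable abbrev kaehlerCosimplicial : CosimplicialObject AddCommGrpCat.{max u v} :=
  polyCosimplicial R σ ⋙ kaehlerFunctor R

theorem hom_objD_kaehlerCosimplicial (n : ℕ) :
    (objD (kaehlerCosimplicial R σ) n).hom = polyOmegaDiff R σ n :=
  map_sum AddCommGrpCat.homAddEquiv _ _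

/-- The extra codegeneracy of `kaehlerCosimplicial` induced by `killSlotZero`. -/
noncomputable def kaehlerExtraCodegeneracy : ExtraCodegeneracy (kaehlerCosimplicial R σ) where
  s n := AddCommGrpCat.ofHom (kaehlerMap (killSlotZero R σ (n + 1)))
  δ_zero_comp_s n :=
    congrArg AddCommGrpCat.ofHom (kaehlerMap_killSlotZero_comp_polyCoface_zero R σ (n + 1))
  δ_one_comp_s_zero :=
    congrArg AddCommGrpCat.ofHom (kaehlerMap_killSlotZero_comp_polyCoface_one R σ)
  δ_succ_comp_s n j :=
    congrArg AddCommGrpCat.ofHom (kaehlerMap_killSlotZero_comp_polyCoface_succ R σ (n + 1) j)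

theorem polyOmegaDiff_comp_polyOmegaDiff (n : ℕ) :
    (polyOmegaDiff R σ (n + 1)).comp (polyOmegaDiff R σ n) = 0 := by
  rw [← hom_objD_kaehlerCosimplicial, ← hom_objD_kaehlerCosimplicial]
  exact congrArg AddCommGrpCat.Hom.hom (d_squared (kaehlerCosimplicial R σ) n)

theorem kaehlerMap_killSlotZero_comp_polyOmegaDiff_zero :
    (kaehlerMap (killSlotZero R σ 1)).comp (polyOmegaDiff R σ 0) = AddMonoidHom.id _ := by
  rw [← hom_objD_kaehlerCosimplicial]
  exact congrArg AddCommGrpCat.Hom.hom (kaehlerExtraCodegeneracy R σ).objD_zero_comp_s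

theorem kaehlerMap_killSlotZero_comp_polyOmegaDiff_succ (n : ℕ) :
    (kaehlerMap (killSlotZero R σ (n + 2))).comp (polyOmegaDiff R σ (n + 1)) +
      (polyOmegaDiff R σ n).comp (kaehlerMap (killSlotZero R σ (n + 1))) = AddMonoidHom.id _ := by
  rw [← hom_objD_kaehlerCosimplicial, ← hom_objD_kaehlerCosimplicial]
  exact congrArg AddCommGrpCat.Hom.hom ((kaehlerExtraCodegeneracy R σ).objD_succ_comp_s n)

end TensorPower

theorem statement7_general (R : Type*) [CommRing R] (σ : Type*) :
    Function.Injective (polyOmegaDiff R σ 0) ∧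
    ∀ n : ℕ, ∀ x : Ω[MvPolynomial (σ × Fin (n + 2)) R⁄R],
      polyOmegaDiff R σ (n + 1) x = 0 ↔
        ∃ y : Ω[MvPolynomial (σ × Fin (n + 1)) R⁄R], polyOmegaDiff R σ n y = x := by
  refine ⟨Function.LeftInverse.injective (g := kaehlerMap (killSlotZero R σ 1)) ?_,
    fun n x => ⟨fun hx => ⟨kaehlerMap (killSlotZero R σ (n + 1)) x, ?_⟩, ?_⟩⟩
  · exact DFunLike.congr_fun (kaehlerMap_killSlotZero_comp_polyOmegaDiff_zero R σ)
  · simpa [hx] using DFunLike.congr_fun (kaehlerMap_killSlotZero_comp_polyOmegaDiff_succ R σ n) x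
  · rintro ⟨y, rfl⟩
    exact DFunLike.congr_fun (polyOmegaDiff_comp_polyOmegaDiff R σ n) y

/-- For `P = ℤ_p[{x_i}_{i ∈ σ}]` and `P(n)` the `(n+1)`-fold tensor power
of `P` over `ℤ_p`, the cochain complex with `n`-th term `Ω¹_{P(n)/ℤ_p}` and differential
`d^n = Σ_{j=0}^{n+1} (−1)^j (δ^n_j)_*` is exact in every degree: `d^0` is injective, and
for every `n ≥ 1` the kernel of `d^n` equals the image of `d^{n−1}`. -/
theorem statement7 (p : ℕ) [Fact p.Prime] (σ : Type*) :
    Function.Injective (tensorPowerPolyOmegaDiff p σ 0) ∧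
    ∀ n : ℕ, ∀ x : Ω[tensorPowerPoly p σ (n + 1)⁄PadicInt p],
      tensorPowerPolyOmegaDiff p σ (n + 1) x = 0 ↔
        ∃ y : Ω[tensorPowerPoly p σ n⁄PadicInt p], tensorPowerPolyOmegaDiff p σ n y = x :=
  statement7_general ℤ_[p] σ
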